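/- For any odd positive integer n, there are infinitely many integers d (with d, d+1, d+4, d+36 and d+100 all negative) such that n divides the class number of each of the five imaginary quadratic fields ℚ(√d), ℚ(√(d+1)), ℚ(√(d+4)), ℚ(√(d+36)) and ℚ(√(d+100)); that is, the set of such integers d is infinite. -/

import Mathlib

/-- The quadratic field `ℚ(√d)`, realized as the subfield of `ℂ` generated over `ℚ`
by a complex square root of `d`. -/
noncomputable def Qsqrt (d : ℤ) : IntermediateField ℚ ℂ :=
  IntermediateField.adjoin ℚ {((d : ℂ) ^ ((1 : ℂ) / 2))}

/-- The class number of `ℚ(√d)`: the order of the ideal class group of its ring of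
integers. -/
noncomputable def classNumSqrt (d : ℤ) : ℕ :=
  Nat.card (ClassGroup (NumberField.RingOfIntegers (Qsqrt d)))

theorem Qsqrt_eq (D : ℤ) (z : ℂ) (hz : z ^ 2 = D) : Qsqrt D = IntermediateField.adjoin ℚ {z} := by
  unfold Qsqrt
  have h : ((D : ℂ) ^ ((1 : ℂ) / 2)) ^ 2 = D := by
    have := Complex.cpow_nat_inv_pow (D : ℂ) (n := 2) two_ne_zero
    simpa using this
  rw [← hz] at h
  rcases sq_eq_sq_iff_eq_or_eq_neg.mp (h.trans rfl) with h1 | h1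
  · rw [← hz, h1]
  · rw [← hz, h1]
    apply le_antisymm
    · rw [IntermediateField.adjoin_simple_le_iff]
      exact neg_mem (IntermediateField.mem_adjoin_simple_self ℚ z)
    · rw [IntermediateField.adjoin_simple_le_iff]
      have := neg_mem (IntermediateField.mem_adjoin_simple_self ℚ (-z))
      simpa using this

theorem Qsqrt_pow (t : ℕ) (ht : 0 < t) (j : ℕ) :
    Qsqrt (-(t : ℤ) ^ (2 * j + 1)) = Qsqrt (-(t : ℤ)) := by
  obtain ⟨z, hz⟩ : ∃ z : ℂ, z ^ 2 = ((-(t : ℤ) : ℤ) : ℂ) := IsAlgClosed.exists_pow_nat_eq _ (by norm_num)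
  have ht0 : (t : ℂ) ≠ 0 := by exact_mod_cast ht.ne'
  rw [Qsqrt_eq _ z hz, Qsqrt_eq _ ((t : ℂ) ^ j * z)]
  · apply le_antisymm
    · rw [IntermediateField.adjoin_simple_le_iff]
      exact mul_mem (pow_mem (natCast_mem _ t) j) (IntermediateField.mem_adjoin_simple_self ℚ z)
    · rw [IntermediateField.adjoin_simple_le_iff]
      have h1 := IntermediateField.mem_adjoin_simple_self ℚ ((t : ℂ) ^ j * z)
      have h2 := mul_mem (inv_mem (pow_mem (natCast_mem (IntermediateField.adjoin ℚ {(t : ℂ) ^ j * z}) t) j)) h1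
      rwa [inv_mul_cancel_left₀ (pow_ne_zero _ ht0)] at h2
  · rw [mul_pow, hz]; push_cast; ring

theorem mem_form (D : ℤ) (hD : D < 0) (z : ℂ) (hz : z ^ 2 = D) (x : ℂ)
    (hx : x ∈ IntermediateField.adjoin ℚ {z}) : ∃ a b : ℚ, x = a + b * z := by
  induction hx using IntermediateField.adjoin_induction with
  | mem x hx => exact ⟨0, 1, by simp at hx; simp [hx]⟩
  | algebraMap x => exact ⟨x, 0, by simp⟩
  | add x y _ _ hx hy =>
    obtain ⟨a, b, rfl⟩ := hx
    obtain ⟨c, d, rfl⟩ := hy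
    exact ⟨a + c, b + d, by push_cast; ring⟩
  | mul x y _ _ hx hy =>
    obtain ⟨a, b, rfl⟩ := hx
    obtain ⟨c, d, rfl⟩ := hy
    refine ⟨a * c + b * d * D, b * c + a * d, ?_⟩
    push_cast
    rw [← hz]; ring
  | inv x _ hx =>
    obtain ⟨a, b, rfl⟩ := hx
    by_cases h0 : a ^ 2 - b ^ 2 * D = 0
    · have hD' : (D : ℚ) < 0 := by exact_mod_cast hD
      have ha : a = 0 := by nlinarith [sq_nonneg a, sq_nonneg b, mul_nonneg (sq_nonneg b) (neg_nonneg.mpr hD'.le)]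
      have hb : b = 0 := by
        subst ha
        have : b ^ 2 = 0 := by
          have : b ^ 2 * D = 0 := by linarith
          exact (mul_eq_zero.mp this).resolve_right hD'.ne
        simpa using this
      exact ⟨0, 0, by simp [ha, hb]⟩
    · refine ⟨a / (a ^ 2 - b ^ 2 * D), -b / (a ^ 2 - b ^ 2 * D), ?_⟩
      have h0' : (a : ℂ) ^ 2 - (b : ℂ) ^ 2 * D ≠ 0 := by exact_mod_cast h0
      have h1 : ((a : ℂ) + b * z) * (a - b * z) = (a : ℂ) ^ 2 - (b : ℂ) ^ 2 * D := by rw [← hz]; ring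
      have h2 : ((a : ℂ) + b * z) ≠ 0 := fun h => h0' (by rw [← h1, h, zero_mul])
      apply inv_eq_of_mul_eq_one_right
      push_cast
      field_simp
      linear_combination h1

/-- Lucas sequence -/
def lucV (u N : ℤ) : ℕ → ℤ
  | 0 => 2
  | 1 => u
  | (j + 2) => u * lucV u N (j + 1) - N * lucV u N j

theorem lucV_eq (u N : ℤ) (x y : ℂ) (h1 : x + y = u) (h2 : x * y = N) (j : ℕ) :
    (lucV u N j : ℂ) = x ^ j + y ^ j ∧ (lucV u N (j + 1) : ℂ) = x ^ (j + 1) + y ^ (j + 1) := by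
  induction j with
  | zero => simp [lucV, h1]; norm_num
  | succ j ih =>
    refine ⟨ih.2, ?_⟩
    rw [lucV]; push_cast
    rw [ih.1, ih.2, ← h1, ← h2]; ring

theorem lucV_dvd (u N : ℤ) (j : ℕ) : u ∣ lucV u N (2 * j + 1) := by
  induction j with
  | zero => simp [lucV]
  | succ j ih =>
    rw [show 2 * (j + 1) + 1 = (2 * j + 1) + 2 by ring, lucV]
    exact dvd_sub (dvd_mul_right _ _) (ih.mul_left _)

theorem lucV_mod (u N : ℤ) (j : ℕ) : N ∣ u ^ (j + 1) - lucV u N (j + 1) := by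
  induction j with
  | zero => simp [lucV]
  | succ j ih =>
    rw [lucV]
    have : u ^ (j + 1 + 1) - (u * lucV u N (j + 1) - N * lucV u N j) =
      u * (u ^ (j + 1) - lucV u N (j + 1)) + N * lucV u N j := by ring
    rw [this]
    exact dvd_add (ih.mul_left _) (dvd_mul_right _ _)

theorem no_root (n p m t k : ℕ) (hp : Odd p) (hp1 : p ≠ 1) (hpn : p ≤ n) (hm : m ≠ 0)
    (hk : 0 < k) (hk10 : k ≤ 10) (hk4 : ¬ 4 ∣ k) (ht : 20 ^ n + 20 < t)
    (u : ℤ) (x y : ℂ) (h1 : x + y = u) (h2 : x * y = (t : ℂ) ^ m) (h3 : x ^ p + y ^ p = 2 * k) :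
    False := by
  obtain ⟨j, rfl⟩ := hp
  have hV : lucV u ((t : ℤ) ^ m) (2 * j + 1) = 2 * k := by
    have := (lucV_eq u ((t : ℤ) ^ m) x y h1 (by rw [h2]; push_cast; rfl) (2 * j)).2
    rw [h3] at this
    exact_mod_cast this
  have hd := lucV_dvd u ((t : ℤ) ^ m) j
  have hmod := lucV_mod u ((t : ℤ) ^ m) (2 * j)
  rw [hV] at hd hmod
  have hu : |u| ≤ 20 := by
    have := Int.le_of_dvd (by omega) ((abs_dvd _ _).mpr hd)
    omega
  have hup : |u ^ (2 * j + 1)| ≤ 20 ^ n := by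
    rw [abs_pow]
    exact (pow_le_pow_left₀ (abs_nonneg u) hu _).trans (pow_le_pow_right₀ (by norm_num) hpn)
  have htm : (t : ℤ) ≤ (t : ℤ) ^ m := le_self_pow₀ (by exact_mod_cast (by linarith [Nat.zero_le (20 ^ n)] : 1 ≤ t)) hm
  have ht' : (20 : ℤ) ^ n + 20 < t := by exact_mod_cast ht
  have heq : u ^ (2 * j + 1) - 2 * k = 0 := by
    apply Int.eq_zero_of_abs_lt_dvd hmod
    rw [abs_lt]
    rw [abs_le] at hup
    constructor <;> linarith [hup.1, hup.2, (by exact_mod_cast hk10 : (k : ℤ) ≤ 10), (by exact_mod_cast hk : (0 : ℤ) < k)]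
  have hj : j ≠ 0 := by rintro rfl; simp at hp1
  have h2u : (2 : ℤ) ∣ u := by
    apply Int.prime_two.dvd_of_dvd_pow (n := 2 * j + 1)
    exact ⟨k, by linarith⟩
  have h8 : (2 : ℤ) ^ 3 ∣ u ^ (2 * j + 1) :=
    (pow_dvd_pow_of_dvd h2u 3).trans (pow_dvd_pow u (by omega))
  apply hk4
  rw [show u ^ (2 * j + 1) = 2 * k by linarith] at h8
  omega

theorem int_of_rat (x : ℂ) (hx : IsIntegral ℤ x) (q : ℚ) (hq : x = q) : ∃ m : ℤ, x = m := by
  have : IsIntegral ℤ (algebraMap ℚ ℂ q) := by simpa [← hq] using hx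
  rw [isIntegral_algebraMap_iff (algebraMap ℚ ℂ).injective] at this
  obtain ⟨m, hm⟩ := IsIntegrallyClosed.isIntegral_iff.mp this
  exact ⟨m, by rw [hq, ← hm]; simp⟩

theorem conj_int (x : ℂ) (hx : IsIntegral ℤ x) : IsIntegral ℤ (starRingEnd ℂ x) := 
  hx.map (starRingEnd ℂ).toIntAlgHom

theorem ideal_pow {R : Type*} [CommRing R] [IsDedekindDomain R] (I J L : Ideal R) (n : ℕ)
    (h : I ⊔ J = ⊤) (hm : I * J = L ^ n) : ∃ A : Ideal R, I = A ^ n := by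
  exact exists_eq_pow_of_mul_eq_pow_of_coprime (Ideal.isCoprime_iff_sup_eq.mpr h) hm

/-- class number of a subfield of the complex numbers -/
noncomputable def cnF (K : IntermediateField ℚ ℂ) : ℕ :=
  Nat.card (ClassGroup (NumberField.RingOfIntegers K))

theorem classNumSqrt_eq (d : ℤ) : classNumSqrt d = cnF (Qsqrt d) := rfl

open NumberField in
theorem main_dvd (n t k : ℕ) (hn : Odd n) (hk : 0 < k) (hk10 : k ≤ 10) (hk4 : ¬ 4 ∣ k)
    (hco : Nat.Coprime t (2 * k)) (ht : 20 ^ n + 20 < t) (D : ℤ)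
    (hDeq : D = (k : ℤ) ^ 2 - (t : ℤ) ^ n) (hD : D < 0) (h3 : ¬ IsSquare (-3 * D)) :
    n ∣ classNumSqrt D := by
  rw [classNumSqrt_eq]
  set r : ℝ := Real.sqrt (-(D : ℝ)) with hr
  set z : ℂ := (r : ℂ) * Complex.I with hzdef
  have hr2 : r ^ 2 = -(D : ℝ) := Real.sq_sqrt (by
    have : (D : ℝ) < 0 := by exact_mod_cast hD
    linarith)
  have hz : z ^ 2 = D := by
    have : (r : ℂ) ^ 2 = -(D : ℂ) := by exact_mod_cast hr2
    rw [hzdef, mul_pow, this, Complex.I_sq]; ring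
  have hzc : starRingEnd ℂ z = -z := by simp [hzdef]
  have hzi : IsIntegral ℤ z := by
    refine IsIntegral.of_pow (n := 2) (by norm_num) ?_
    rw [hz]
    exact isIntegral_algebraMap (R := ℤ) (A := ℂ) (x := D)
  rw [Qsqrt_eq D z hz]
  unfold cnF
  have hzq : IsIntegral ℚ z := hzi.tower_top
  haveI : FiniteDimensional ℚ (IntermediateField.adjoin ℚ {z}) :=
    IntermediateField.adjoin.finiteDimensional hzq
  haveI : NumberField (IntermediateField.adjoin ℚ {z}) := { }
  have hform := mem_form D hD z hz
  set K := IntermediateField.adjoin ℚ {z} with hK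
  have hzK : z ∈ K := IntermediateField.mem_adjoin_simple_self ℚ z
  -- embedding into the complex numbers
  let φ : 𝓞 K →+* ℂ := (algebraMap K ℂ).comp (algebraMap (𝓞 K) K)
  have hφinj : Function.Injective φ :=
    (algebraMap K ℂ).injective.comp (RingOfIntegers.coe_injective)
  have hφint : ∀ x, IsIntegral ℤ (φ x) := fun x =>
    (RingOfIntegers.isIntegral_coe x).map (algebraMap K ℂ).toIntAlgHom
  have hφmem : ∀ x, ∃ a b : ℚ, φ x = a + b * z := fun x => hform _ (algebraMap (𝓞 K) K x).2
  have hφsurj : ∀ x ∈ K, IsIntegral ℤ x → ∃ y, φ y = x := by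
    intro x hx hi
    have : IsIntegral ℤ (⟨x, hx⟩ : K) :=
      (isIntegral_algHom_iff (algebraMap K ℂ).toIntAlgHom (algebraMap K ℂ).injective).mp hi
    exact ⟨⟨⟨x, hx⟩, this⟩, rfl⟩
  have htr : ∀ x, ∃ m : ℤ, φ x + starRingEnd ℂ (φ x) = m := by
    intro x
    obtain ⟨a, b, hab⟩ := hφmem x
    refine int_of_rat _ ((hφint x).add (conj_int _ (hφint x))) (2 * a) ?_
    rw [hab]; simp [hzc]; ring
  -- units
  have hunit : ∀ e : (𝓞 K)ˣ, φ e ^ 4 = 1 := by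
    intro e
    have hpos : ∀ x : 𝓞 K, x ≠ 0 → ∃ m : ℤ, Complex.normSq (φ x) = m ∧ 0 < m := by
      intro x hx
      obtain ⟨a, b, hab⟩ := hφmem x
      obtain ⟨m, hm⟩ := int_of_rat _ ((hφint x).mul (conj_int _ (hφint x))) (a ^ 2 - b ^ 2 * D) (by
        rw [hab]; simp [hzc, ← hz]; ring)
      rw [Complex.mul_conj] at hm
      have hm' : Complex.normSq (φ x) = m := by exact_mod_cast hm
      refine ⟨m, hm', ?_⟩
      have : 0 < Complex.normSq (φ x) := Complex.normSq_pos.mpr (by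
        rwa [Ne, map_eq_zero_iff φ hφinj])
      rw [hm'] at this
      exact_mod_cast this
    obtain ⟨m1, h1, p1⟩ := hpos e e.ne_zero
    obtain ⟨m2, h2, p2⟩ := hpos _ (e⁻¹).ne_zero
    have hm12 : m1 * m2 = 1 := by
      have : Complex.normSq (φ e) * Complex.normSq (φ (e⁻¹ : (𝓞 K)ˣ)) = 1 := by
        rw [← Complex.normSq_mul, ← map_mul, Units.mul_inv]; simp
      rw [h1, h2] at this
      exact_mod_cast this
    have hm1 : m1 = 1 := Int.eq_one_of_mul_eq_one_right p1.le hm12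
    rw [hm1] at h1
    have hN : φ e * starRingEnd ℂ (φ e) = 1 := by rw [Complex.mul_conj, h1]; simp
    obtain ⟨m, hm⟩ := htr e
    have hquad : φ e ^ 2 = m * φ e - 1 := by rw [← hm]; linear_combination -hN
    have hm4 : m ^ 2 ≤ 4 := by
      have hre : 2 * (φ e).re = m := by
        have := congrArg Complex.re hm
        simp at this
        linarith
      have hns := Complex.normSq_apply (φ e)
      rw [h1] at hns
      have : (m : ℝ) ^ 2 ≤ 4 := by
        rw [← hre]
        push_cast at hns
        nlinarith [mul_self_nonneg (φ e).im]
      exact_mod_cast this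
    have hno : m ^ 2 ≠ 1 := by
      intro hm1
      apply h3
      obtain ⟨a, b, hab⟩ := hφmem e
      have hma : (m : ℂ) = 2 * a := by rw [← hm, hab]; simp [hzc]; ring
      have hm1' : (m : ℂ) ^ 2 = 1 := by exact_mod_cast hm1
      have h4 : (2 * (b : ℂ)) ^ 2 * D = -3 := by
        have e1 : 2 * φ e - m = 2 * b * z := by rw [hma, hab]; ring
        have e2 : (2 * φ e - m) ^ 2 = -3 := by linear_combination 4 * hquad + hm1'
        rw [e1] at e2
        rw [← hz]; linear_combination e2
      have h5 : (2 * b) ^ 2 * (D : ℚ) = -3 := by exact_mod_cast h4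
      rw [← Rat.isSquare_intCast_iff]
      refine ⟨2 * b * D, ?_⟩
      push_cast
      linear_combination (-(D : ℚ)) * h5
    have hle : m ≤ 2 := by nlinarith
    have hge : -2 ≤ m := by nlinarith
    interval_cases m
    · have : φ e + 1 = 0 := by
        have : (φ e + 1) ^ 2 = 0 := by push_cast at hquad; linear_combination hquad
        simpa using this
      rw [eq_neg_of_add_eq_zero_left this]; norm_num
    · norm_num at hno
    · have : φ e ^ 2 = -1 := by push_cast at hquad; linear_combination hquad
      rw [show 4 = 2 * 2 by norm_num, pow_mul, this]; norm_num
    · norm_num at hno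
    · have : φ e - 1 = 0 := by
        have : (φ e - 1) ^ 2 = 0 := by push_cast at hquad; linear_combination hquad
        simpa using this
      rw [sub_eq_zero.mp this]; norm_num
  obtain ⟨α, hα⟩ := hφsurj (k + z) (add_mem (natCast_mem _ k) hzK)
    ((isIntegral_algebraMap (R := ℤ) (A := ℂ) (x := (k : ℤ))).add hzi)
  obtain ⟨α', hα'⟩ := hφsurj (k - z) (sub_mem (natCast_mem _ k) hzK)
    ((isIntegral_algebraMap (R := ℤ) (A := ℂ) (x := (k : ℤ))).sub hzi)
  have hmul : α * α' = (t : 𝓞 K) ^ n := by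
    apply hφinj
    rw [map_mul, hα, hα', map_pow, map_natCast]
    have : (D : ℂ) = (k : ℂ) ^ 2 - (t : ℂ) ^ n := by rw [hDeq]; push_cast; rfl
    linear_combination -hz - this
  have hadd : α + α' = 2 * k := by
    apply hφinj
    rw [map_add, hα, hα', map_mul, map_natCast, map_ofNat]
    ring
  have ht0 : 0 < t := by linarith [Nat.zero_le (20 ^ n)]
  have hn0 : 0 < n := hn.pos
  have hα0 : α ≠ 0 := by
    rintro rfl
    rw [zero_mul] at hmul
    have := pow_ne_zero n (Nat.cast_ne_zero.mpr ht0.ne' : (t : 𝓞 K) ≠ 0)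
    exact this hmul.symm
  have hcop : Ideal.span {α} ⊔ Ideal.span {α'} = ⊤ := by
    have hc : IsCoprime ((t ^ n : ℕ) : ℤ) ((2 * k : ℕ) : ℤ) :=
      Nat.isCoprime_iff_coprime.mpr (hco.pow_left n)
    obtain ⟨a, b, hab⟩ := hc
    rw [Ideal.eq_top_iff_one]
    have h1 : (1 : 𝓞 K) = (a * α') * α + b * α + b * α' := by
      have := congrArg (Int.cast : ℤ → 𝓞 K) hab
      push_cast at this
      rw [← this, ← hmul, ← hadd]; ring
    rw [h1]
    have e1 : α ∈ Ideal.span {α} ⊔ Ideal.span {α'} :=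
      Ideal.mem_sup_left (Ideal.mem_span_singleton_self α)
    have e2 : α' ∈ Ideal.span {α} ⊔ Ideal.span {α'} :=
      Ideal.mem_sup_right (Ideal.mem_span_singleton_self α')
    exact add_mem (add_mem (Ideal.mul_mem_left _ _ e1) (Ideal.mul_mem_left _ _ e1))
      (Ideal.mul_mem_left _ _ e2)
  obtain ⟨A, hA⟩ := ideal_pow (Ideal.span {α}) (Ideal.span {α'}) (Ideal.span {(t : 𝓞 K)}) n hcop
    (by rw [Ideal.span_singleton_mul_span_singleton, hmul, Ideal.span_singleton_pow])
  have hA0 : A ∈ nonZeroDivisors (Ideal (𝓞 K)) := by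
    rw [mem_nonZeroDivisors_iff_ne_zero]
    rintro rfl
    rw [zero_pow hn0.ne'] at hA
    exact hα0 (Ideal.span_singleton_eq_bot.mp hA)
  have hprin : ∀ j : ℕ, (ClassGroup.mk0 ⟨A, hA0⟩ : ClassGroup (𝓞 K)) ^ j = 1 ↔
      (A ^ j).IsPrincipal := by
    intro j
    rw [← map_pow, SubmonoidClass.mk_pow, ClassGroup.mk0_eq_one_iff]
  have hord : orderOf (ClassGroup.mk0 ⟨A, hA0⟩ : ClassGroup (𝓞 K)) = n := by
    apply orderOf_eq_of_pow_and_pow_div_prime hn0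
    · rw [hprin, ← hA]; exact ⟨⟨α, rfl⟩⟩
    · intro p hp hpn h
      rw [hprin] at h
      obtain ⟨⟨β, hβ⟩⟩ := h
      obtain ⟨m, hm⟩ := hpn
      have hpodd : Odd p := hn.of_dvd_nat ⟨m, hm⟩
      have hm0 : m ≠ 0 := by rintro rfl; omega
      rw [hm, Nat.mul_div_cancel_left _ hp.pos] at hβ
      have hass : Associated (β ^ p) α := by
        rw [← Ideal.span_singleton_eq_span_singleton, ← Ideal.span_singleton_pow, hA, hm, mul_comm p m,
          pow_mul, hβ]
      obtain ⟨e, he⟩ := hass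
      set γ : 𝓞 K := β * (e : 𝓞 K) ^ p with hγ
      have hγp : φ γ ^ p = k + z := by
        obtain ⟨i, hi⟩ := hpodd
        have h1 : φ e ^ (p * p) = φ e := by
          have : p * p = 4 * (i * i + i) + 1 := by rw [hi]; ring
          rw [this, pow_succ, pow_mul, hunit, one_pow, one_mul]
        rw [← hα, ← he, hγ, map_mul, map_mul, mul_pow, map_pow, map_pow, ← pow_mul, h1]
      obtain ⟨u, hu⟩ := htr γ
      have hγc : (starRingEnd ℂ (φ γ)) ^ p = k - z := by
        rw [← map_pow, hγp, map_add, hzc]; simp; ring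
      refine no_root n p m t k hpodd hp.one_lt.ne' (Nat.le_of_dvd hn0 ⟨m, hm⟩) hm0 hk hk10 hk4 ht u
        (φ γ) (starRingEnd ℂ (φ γ)) hu ?_ ?_
      · rw [Complex.mul_conj]
        have h1 : (Complex.normSq (φ γ)) ^ p = ((t : ℝ) ^ m) ^ p := by
          have : ((Complex.normSq (φ γ) : ℂ)) ^ p = ((t : ℂ) ^ m) ^ p := by
            rw [← Complex.mul_conj, mul_pow, hγp, hγc, ← pow_mul, mul_comm m p, ← hm,
              ← hα, ← hα', ← map_mul, hmul]
            simp
          exact_mod_cast this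
        have h2 := (pow_left_inj₀ (Complex.normSq_nonneg _) (by positivity) hp.ne_zero).mp h1
        rw [h2]; push_cast; rfl
      · rw [hγp, hγc]; ring
  rw [← hord]
  exact orderOf_dvd_natCard _

theorem infinite_quintuples_classNumber_dvd (n : ℕ) (hn : Odd n) (hnpos : 0 < n) :
    {d : ℤ | d < 0 ∧ d + 1 < 0 ∧ d + 4 < 0 ∧ d + 36 < 0 ∧ d + 100 < 0 ∧
      n ∣ classNumSqrt d ∧ n ∣ classNumSqrt (d + 1) ∧ n ∣ classNumSqrt (d + 4) ∧
      n ∣ classNumSqrt (d + 36) ∧ n ∣ classNumSqrt (d + 100)}.Infinite := by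
  apply Set.infinite_of_forall_exists_lt
  intro B
  obtain ⟨P, hP⟩ : ∃ P, 20 ^ n = P := ⟨_, rfl⟩
  obtain ⟨s, hs⟩ : ∃ s : ℕ, s = P + 20 + B.natAbs := ⟨_, rfl⟩
  set a : ℕ := 120 * s + 71 with ha
  have haa : a ≤ a ^ n := Nat.le_self_pow hnpos.ne' a
  obtain ⟨t, hta⟩ : ∃ t, a ^ n = t + 4 := ⟨a ^ n - 4, by omega⟩
  obtain ⟨j, hj⟩ := hn
  have ha120 : a ^ n % 120 = 71 := by
    have h1 : a ≡ 71 [MOD 120] := by unfold Nat.ModEq; omega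
    have h2 : 71 ^ n ≡ 71 [MOD 120] := by
      rw [hj, pow_succ, pow_mul]
      have : 71 ^ 2 ≡ 1 [MOD 120] := by decide
      simpa using (this.pow j).mul_right 71
    exact (h1.pow n).trans h2
  have ht120 : t % 120 = 67 := by omega
  have ht8 : t ^ n % 8 = 3 := by
    have h1 : t ≡ 3 [MOD 8] := by unfold Nat.ModEq; omega
    have h2 : 3 ^ n ≡ 3 [MOD 8] := by
      rw [hj, pow_succ, pow_mul]
      have : 3 ^ 2 ≡ 1 [MOD 8] := by decide
      simpa using (this.pow j).mul_right 3
    exact (h1.pow n).trans h2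
  have htco : Nat.Coprime t 120 := by
    rw [Nat.Coprime, Nat.gcd_comm, Nat.gcd_rec, ht120]
    norm_num
  have haco : Nat.Coprime a (2 * 2) := by
    rw [Nat.Coprime, Nat.gcd_comm, Nat.gcd_rec, show a % (2 * 2) = 3 by omega]
    norm_num
  have htt : t ≤ t ^ n := Nat.le_self_pow hnpos.ne' t
  have hts : s + 100 ≤ t := by omega
  have hta' : (a : ℤ) ^ n = t + 4 := by exact_mod_cast hta
  obtain ⟨T, hT⟩ : ∃ T, t ^ n = T := ⟨_, rfl⟩
  have hT' : (t : ℤ) ^ n = T := by exact_mod_cast hT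
  rw [hT] at ht8 htt
  have hsq8 : ∀ w : ℤ, w * w % 8 = 0 ∨ w * w % 8 = 1 ∨ w * w % 8 = 4 := by
    intro w
    have : w % 8 = 0 ∨ w % 8 = 1 ∨ w % 8 = 2 ∨ w % 8 = 3 ∨ w % 8 = 4 ∨ w % 8 = 5 ∨ w % 8 = 6 ∨
      w % 8 = 7 := by omega
    rcases this with h | h | h | h | h | h | h | h <;> simp [Int.mul_emod, h]
  have hsq9 : ∀ w : ℤ, w * w % 9 ≠ 3 := by
    intro w
    have : w % 9 = 0 ∨ w % 9 = 1 ∨ w % 9 = 2 ∨ w % 9 = 3 ∨ w % 9 = 4 ∨ w % 9 = 5 ∨ w % 9 = 6 ∨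
      w % 9 = 7 ∨ w % 9 = 8 := by omega
    rcases this with h | h | h | h | h | h | h | h | h <;> simp [Int.mul_emod, h]
  refine ⟨-(T : ℤ), ⟨by omega, by omega, by omega, by omega, by omega, ?_, ?_, ?_, ?_, ?_⟩, by omega⟩
  · have : classNumSqrt (-(T : ℤ)) = classNumSqrt (-(t : ℤ)) := by
      rw [classNumSqrt_eq, classNumSqrt_eq, ← hT', hj, Qsqrt_pow t (by omega) j]
    rw [this]
    refine main_dvd n a 2 ⟨j, hj⟩ (by norm_num) (by norm_num) (by norm_num) haco (by rw [hP]; omega) _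
      (by rw [hta']; push_cast; ring) (by omega) ?_
    rintro ⟨w, hw⟩
    have := hsq9 w
    omega
  · refine main_dvd n t 1 ⟨j, hj⟩ (by norm_num) (by norm_num) (by norm_num)
      (htco.coprime_dvd_right (by norm_num)) (by rw [hP]; omega) _
      (by rw [hT']; push_cast; ring) (by omega) ?_
    rintro ⟨w, hw⟩
    have := hsq8 w
    omega
  · refine main_dvd n t 2 ⟨j, hj⟩ (by norm_num) (by norm_num) (by norm_num)
      (htco.coprime_dvd_right (by norm_num)) (by rw [hP]; omega) _
      (by rw [hT']; push_cast; ring) (by omega) ?_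
    rintro ⟨w, hw⟩
    have := hsq8 w
    omega
  · refine main_dvd n t 6 ⟨j, hj⟩ (by norm_num) (by norm_num) (by norm_num)
      (htco.coprime_dvd_right (by norm_num)) (by rw [hP]; omega) _
      (by rw [hT']; push_cast; ring) (by omega) ?_
    rintro ⟨w, hw⟩
    have := hsq8 w
    omega
  · refine main_dvd n t 10 ⟨j, hj⟩ (by norm_num) (by norm_num) (by norm_num)
      (htco.coprime_dvd_right (by norm_num)) (by rw [hP]; omega) _
      (by rw [hT']; push_cast; ring) (by omega) ?_
    rintro ⟨w, hw⟩
    have := hsq8 w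
    omega
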